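/- Let C be the linear map on ℂ^64 defined by: C e_21 = e_42 and C e_42 = e_21; C e_a = (−e_a + 2 e_b + 2 e_c)/3 for every cyclic rotation (a,b,c) of the triple (9, 18, 36) and of the triple (27, 45, 54); and C e_s = e_s for all remaining s ∈ {0,…,63}. The real vector space of 64×64 Hermitian complex matrices O satisfying C·O = O·C has real dimension exactly 3506 = 4^6 − 590; equivalently, the FHP model with the 2-, 3- and 4-body zero-momentum collisions has exactly 3506 linearly independent quantum invariants. -/

import Mathlib

open Matrix

/-- The Pauli-`Z` operator on qubit `i` of a 6-qubit register: the `64 × 64` diagonal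
matrix whose `(s,s)` entry is `(−1)^{n_i(s)}`, where `n_i(s)` is the `i`-th binary
digit of `s`. -/
def Zq (i : ℕ) : Matrix (Fin 64) (Fin 64) ℂ :=
  Matrix.diagonal fun s => (-1 : ℂ) ^ (s.val / 2 ^ i % 2)

/-- The FHP mass observable `M = Z₀ + Z₁ + Z₂ + Z₃ + Z₄ + Z₅`. -/
def massM : Matrix (Fin 64) (Fin 64) ℂ := Zq 0 + Zq 1 + Zq 2 + Zq 3 + Zq 4 + Zq 5

/-- The FHP `x`-momentum observable `P_x = Z₀ − Z₃ + (1/2)(Z₁ + Z₅ − Z₂ − Z₄)`. -/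
noncomputable def momPx : Matrix (Fin 64) (Fin 64) ℂ :=
  Zq 0 - Zq 3 + (1 / 2 : ℂ) • (Zq 1 + Zq 5 - Zq 2 - Zq 4)

/-- The FHP `y`-momentum observable `P_y = (√3/2)(Z₁ + Z₂ − Z₄ − Z₅)`. -/
noncomputable def momPy : Matrix (Fin 64) (Fin 64) ℂ :=
  ((Real.sqrt 3 / 2 : ℝ) : ℂ) • (Zq 1 + Zq 2 - Zq 4 - Zq 5)

/-- The FHP 3-body collision operator: the `64 × 64` permutation matrix with
`C₃ e₂₁ = e₄₂`, `C₃ e₄₂ = e₂₁` and `C₃ e_s = e_s` for `s ∉ {21, 42}`. -/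
def collC3 : Matrix (Fin 64) (Fin 64) ℂ :=
  Matrix.of fun i j => if i = Equiv.swap (21 : Fin 64) 42 j then 1 else 0

/-- The column of the unitary mixing `e_a ↦ (−e_a + 2 e_b + 2 e_c)/3`. -/
noncomputable def mixCol (i a b c : Fin 64) : ℂ :=
  (1 / 3 : ℂ) * (-(if i = a then 1 else 0) + 2 * (if i = b then 1 else 0)
    + 2 * (if i = c then 1 else 0))

/-- The unitary FHP 0-momentum collision operator `C`: it exchanges `e₂₁ ↔ e₄₂`
(3-body collision), sends `e_a` to `(−e_a + 2 e_b + 2 e_c)/3` for every cyclic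
rotation `(a,b,c)` of `(9,18,36)` and of `(27,45,54)` (unitary realization of the
non-deterministic 2- and 4-body collisions), and fixes all other basis states. -/
noncomputable def collFHP : Matrix (Fin 64) (Fin 64) ℂ :=
  Matrix.of fun i j =>
    if j = 21 then (if i = 42 then 1 else 0)
    else if j = 42 then (if i = 21 then 1 else 0)
    else if j = 9 then mixCol i 9 18 36
    else if j = 18 then mixCol i 18 36 9
    else if j = 36 then mixCol i 36 9 18
    else if j = 27 then mixCol i 27 45 54
    else if j = 45 then mixCol i 45 54 27
    else if j = 54 then mixCol i 54 27 45
    else (if i = j then 1 else 0)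

/-- The real vector space of Hermitian `n × n` complex matrices commuting with `C`,
i.e. the quantum invariants of the collision operator `C`. -/
noncomputable def quantumInvariants {n : Type*} [Fintype n] (C : Matrix n n ℂ) :
    Submodule ℝ (Matrix n n ℂ) where
  carrier := {O | O.IsHermitian ∧ C * O = O * C}
  add_mem' := fun ha hb =>
    ⟨ha.1.add hb.1, by rw [Matrix.mul_add, Matrix.add_mul, ha.2, hb.2]⟩
  zero_mem' := ⟨Matrix.isHermitian_zero, by rw [Matrix.mul_zero, Matrix.zero_mul]⟩
  smul_mem' := fun r O hO =>
    ⟨by rw [Matrix.IsHermitian, Matrix.conjTranspose_smul, star_trivial, hO.1],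
     by rw [Matrix.mul_smul, Matrix.smul_mul, hO.2]⟩

theorem collFHP_sq : collFHP * collFHP = 1 := by
  ext i j
  rw [Matrix.mul_apply, Matrix.one_apply]
  have key : ∀ (f : Fin 64 → ℂ) (a b c : Fin 64),
      ∑ k, f k * mixCol k a b c = (1 / 3 : ℂ) * (-f a + 2 * f b + 2 * f c) := by
    intro f a b c
    have : ∀ k, f k * mixCol k a b c = (1 / 3 : ℂ) * (-(if k = a then f k else 0)
        + 2 * (if k = b then f k else 0) + 2 * (if k = c then f k else 0)) := by
      intro k
      unfold mixCol
      split_ifs <;> ring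
    simp only [this, ← Finset.mul_sum, Finset.sum_add_distrib, Finset.sum_neg_distrib,
      Finset.sum_ite_eq', Finset.sum_ite_eq, Finset.mem_univ, if_true]
  have col : ∀ k, collFHP k j =
    if j = 21 then (if k = 42 then 1 else 0)
    else if j = 42 then (if k = 21 then 1 else 0)
    else if j = 9 then mixCol k 9 18 36
    else if j = 18 then mixCol k 18 36 9
    else if j = 36 then mixCol k 36 9 18
    else if j = 27 then mixCol k 27 45 54
    else if j = 45 then mixCol k 45 54 27
    else if j = 54 then mixCol k 54 27 45
    else (if k = j then 1 else 0) := fun k => rfl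
  simp only [col]
  split_ifs with h1 h2 h3 h4 h5 h6 h7 h8 h9
  all_goals
    simp only [key, mul_ite, mul_one, mul_zero, Finset.sum_ite_eq', Finset.sum_ite_eq,
      Finset.mem_univ, if_true]
  all_goals
    simp only [collFHP, Matrix.of_apply]
    simp [mixCol, *]
  all_goals
    first
    | omega
    | (split_ifs <;> first | (exfalso; omega) | norm_num)
    | norm_num

set_option maxHeartbeats 2000000 in
theorem collFHP_herm : collFHPᴴ = collFHP := by
  ext i j
  rw [Matrix.conjTranspose_apply]
  by_cases h1 : i = 21 ∨ i = 42 ∨ i = 9 ∨ i = 18 ∨ i = 36 ∨ i = 27 ∨ i = 45 ∨ i = 54 <;>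
  by_cases h2 : j = 21 ∨ j = 42 ∨ j = 9 ∨ j = 18 ∨ j = 36 ∨ j = 27 ∨ j = 45 ∨ j = 54
  · rcases h1 with h | h | h | h | h | h | h | h <;> subst h <;>
      rcases h2 with h | h | h | h | h | h | h | h <;> subst h <;>
      simp [collFHP, mixCol]
  · push Not at h2
    obtain ⟨a1, a2, a3, a4, a5, a6, a7, a8⟩ := h2
    rcases h1 with h | h | h | h | h | h | h | h <;> subst h <;>
      simp [collFHP, mixCol, *, Ne.symm a1, Ne.symm a2, Ne.symm a3, Ne.symm a4, Ne.symm a5,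
        Ne.symm a6, Ne.symm a7, Ne.symm a8]
  · push Not at h1
    obtain ⟨a1, a2, a3, a4, a5, a6, a7, a8⟩ := h1
    rcases h2 with h | h | h | h | h | h | h | h <;> subst h <;>
      simp [collFHP, mixCol, *, Ne.symm a1, Ne.symm a2, Ne.symm a3, Ne.symm a4, Ne.symm a5,
        Ne.symm a6, Ne.symm a7, Ne.symm a8]
  · push Not at h1 h2
    obtain ⟨a1, a2, a3, a4, a5, a6, a7, a8⟩ := h1
    obtain ⟨b1, b2, b3, b4, b5, b6, b7, b8⟩ := h2
    by_cases hij : i = j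
    · subst hij
      simp [collFHP, *]
    · simp [collFHP, *, Ne.symm hij]

theorem collFHP_trace : Matrix.trace collFHP = 54 := by
  simp only [Matrix.trace, Matrix.diag]
  have : ∀ x : Fin 64, collFHP x x = 1 - (if x = 21 then 1 else 0) - (if x = 42 then 1 else 0)
      - (4/3) * ((if x = 9 then 1 else 0) + (if x = 18 then 1 else 0) + (if x = 36 then 1 else 0)
      + (if x = 27 then 1 else 0) + (if x = 45 then 1 else 0) + (if x = 54 then 1 else 0)) := by
    intro x
    simp only [collFHP, Matrix.of_apply]
    split_ifs <;> first | (exfalso; omega) | (subst_vars; simp [mixCol]; try norm_num)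
  rw [Finset.sum_congr rfl fun x _ => this x]
  simp only [← Finset.mul_sum, Finset.sum_add_distrib, Finset.sum_sub_distrib,
      Finset.sum_ite_eq', Finset.sum_ite_eq, Finset.mem_univ, if_true]
  norm_num

/-- The complex commutant of a matrix. -/
def commC {m : ℕ} (C : Matrix (Fin m) (Fin m) ℂ) : Submodule ℂ (Matrix (Fin m) (Fin m) ℂ) where
  carrier := {O | C * O = O * C}
  add_mem' := fun {a b} (ha : C * a = a * C) (hb : C * b = b * C) =>
    show C * (a + b) = (a + b) * C by rw [Matrix.mul_add, Matrix.add_mul, ha, hb]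
  zero_mem' := show C * 0 = 0 * C by rw [Matrix.mul_zero, Matrix.zero_mul]
  smul_mem' := fun r O (hO : C * O = O * C) =>
    show C * (r • O) = (r • O) * C by rw [Matrix.mul_smul, Matrix.smul_mul, hO]

/-- The averaging projection onto the commutant of an involution. -/
noncomputable def avg {m : ℕ} (C : Matrix (Fin m) (Fin m) ℂ) :
    Matrix (Fin m) (Fin m) ℂ →ₗ[ℂ] Matrix (Fin m) (Fin m) ℂ :=
  (1 / 2 : ℂ) • (LinearMap.id + (LinearMap.mulLeft ℂ C ∘ₗ LinearMap.mulRight ℂ C))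

theorem avg_apply {m : ℕ} (C O : Matrix (Fin m) (Fin m) ℂ) :
    avg C O = (1 / 2 : ℂ) • (O + C * (O * C)) := rfl

theorem avg_isProj {m : ℕ} (C : Matrix (Fin m) (Fin m) ℂ) (h : C * C = 1) :
    LinearMap.IsProj (commC C) (avg C) where
  map_mem O := by
    change C * _ = _ * C
    rw [avg_apply, Matrix.mul_smul, Matrix.smul_mul]
    congr 1
    have h1 : C * (C * (O * C)) = O * C := by rw [← Matrix.mul_assoc, h, Matrix.one_mul]
    have h2 : C * (O * C) * C = C * O := by
      rw [Matrix.mul_assoc, Matrix.mul_assoc, h, Matrix.mul_one]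
    rw [Matrix.mul_add, Matrix.add_mul, h1, h2, add_comm]
  map_id O hO := by
    have hO' : C * O = O * C := hO
    rw [avg_apply, ← hO', ← Matrix.mul_assoc, h, Matrix.one_mul, ← two_smul ℂ O, smul_smul]
    norm_num

theorem trace_conj {m : ℕ} (C : Matrix (Fin m) (Fin m) ℂ) :
    LinearMap.trace ℂ _ (LinearMap.mulLeft ℂ C ∘ₗ LinearMap.mulRight ℂ C)
      = Matrix.trace C * Matrix.trace C := by
  rw [LinearMap.trace_eq_matrix_trace ℂ (Matrix.stdBasis ℂ (Fin m) (Fin m))]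
  simp only [Matrix.trace, Matrix.diag, LinearMap.toMatrix_apply, Fintype.sum_prod_type,
    Finset.sum_mul_sum]
  refine Finset.sum_congr rfl fun i _ => Finset.sum_congr rfl fun j _ => ?_
  rw [Matrix.stdBasis_eq_single]
  have : ∀ (M : Matrix (Fin m) (Fin m) ℂ) (i j : Fin m),
      (Matrix.stdBasis ℂ (Fin m) (Fin m)).repr M (i, j) = M i j := by
    intro M i j
    rfl
  rw [this]
  simp [Matrix.mul_apply, Matrix.single_apply, Finset.sum_ite_eq, ite_and]

theorem finrank_commC (C : Matrix (Fin 64) (Fin 64) ℂ) (h : C * C = 1)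
    (ht : Matrix.trace C = 54) : Module.finrank ℂ (commC C) = 3506 := by
  have h1 := (avg_isProj C h).trace
  rw [avg, map_smul, map_add, trace_conj, ht, LinearMap.trace_id, Module.finrank_matrix] at h1
  norm_num at h1
  exact_mod_cast h1.symm

theorem finrank_qi {m : ℕ} (C : Matrix (Fin m) (Fin m) ℂ) (hC : Cᴴ = C) :
    Module.finrank ℝ (quantumInvariants C) = Module.finrank ℂ (commC C) := by
  let f : (quantumInvariants C × quantumInvariants C) →ₗ[ℝ] commC C :=
    { toFun := fun p => ⟨p.1.1 + Complex.I • p.2.1,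
        (commC C).add_mem p.1.2.2 ((commC C).smul_mem _ p.2.2.2)⟩
      map_add' := fun p q => by
        apply Subtype.ext
        simp only [Prod.fst_add, Prod.snd_add, Submodule.coe_add, smul_add]
        abel
      map_smul' := fun r p => by
        apply Subtype.ext
        change r • p.1.1 + Complex.I • (r • p.2.1) = r • (p.1.1 + Complex.I • p.2.1)
        rw [smul_add, smul_comm] }
  have hf : Function.Bijective f := by
    constructor
    · rw [injective_iff_map_eq_zero]
      rintro ⟨⟨A, hA, hA'⟩, ⟨B, hB, hB'⟩⟩ h0
      have h1 : A + Complex.I • B = 0 := congrArg Subtype.val h0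
      have h2 := congrArg Matrix.conjTranspose h1
      rw [Matrix.conjTranspose_add, Matrix.conjTranspose_smul, hA, hB] at h2
      have hA0 : A = 0 := by
        ext i j
        have e1 := congrFun (congrFun h1 i) j
        have e2 := congrFun (congrFun h2 i) j
        simp at e1 e2 ⊢
        linear_combination (e1 + e2) / 2
      have hB0 : B = 0 := by
        subst hA0
        simpa using h1
      subst hA0 hB0
      rfl
    · rintro ⟨O, hO⟩
      have hO1 : C * O = O * C := hO
      have hO2 : C * Oᴴ = Oᴴ * C := by
        have := congrArg Matrix.conjTranspose hO1
        rw [Matrix.conjTranspose_mul, Matrix.conjTranspose_mul, hC] at this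
        exact this.symm
      refine ⟨(⟨(1 / 2 : ℂ) • (O + Oᴴ), ?_, ?_⟩, ⟨(-Complex.I / 2) • (O - Oᴴ), ?_, ?_⟩), ?_⟩
      · rw [Matrix.IsHermitian, Matrix.conjTranspose_smul, Matrix.conjTranspose_add,
          Matrix.conjTranspose_conjTranspose, add_comm]
        simp
      · rw [Matrix.mul_smul, Matrix.smul_mul, Matrix.mul_add, Matrix.add_mul, hO1, hO2]
      · rw [Matrix.IsHermitian, Matrix.conjTranspose_smul, Matrix.conjTranspose_sub,
          Matrix.conjTranspose_conjTranspose]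
        ext i j
        simp
        ring
      · rw [Matrix.mul_smul, Matrix.smul_mul, Matrix.mul_sub, Matrix.sub_mul, hO1, hO2]
      · apply Subtype.ext
        change (1 / 2 : ℂ) • (O + Oᴴ) + Complex.I • ((-Complex.I / 2) • (O - Oᴴ)) = O
        ext i j
        simp
        linear_combination (-(O i j - (starRingEnd ℂ) (O j i)) / 2) * Complex.I_mul_I
  have h1 := (LinearEquiv.ofBijective f hf).finrank_eq
  rw [Module.finrank_prod, ← Module.finrank_mul_finrank ℝ ℂ (commC C),
    Complex.finrank_real_complex] at h1
  omega

/-- **Counting quantum invariants of FHP with the 2-, 3- and 4-body zero-momentum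
collisions:** the real vector space of Hermitian `64 × 64` matrices `O` with
`C·O = O·C` has real dimension exactly `3506 = 4⁶ − 590`. -/
theorem fhp_B234_quantum_invariants_dim :
    Module.finrank ℝ (quantumInvariants collFHP) = 3506 ∧ 3506 = 4 ^ 6 - 590 := by
  exact ⟨by rw [finrank_qi _ collFHP_herm, finrank_commC _ collFHP_sq collFHP_trace],
    by norm_num⟩
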